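/- Let S be a commutative, cancellative monoid such that L(s) is finite for all s ∈ S, and let m ∈ 𝒜(S). Then ℓ(s + m) = ℓ(s) + 1 for all s ∈ S if and only if ℓ(φ_S(c_a)) = ℓ(−m + φ_S(c_a)) + 1 for all (c_a) ∈ MinRepl_m(S). -/

import Mathlib

namespace Paper

/-- The additive congruence on `S` identifying associate elements
(`s ∼ t` iff `s + u = t` for some additive unit `u`). -/
def assocCon (S : Type*) [AddCancelCommMonoid S] : AddCon S where
  r s t := ∃ u : AddUnits S, s + (u : S) = t
  iseqv := by
    refine ⟨fun s => ⟨0, by simp⟩, ?_, ?_⟩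
    · rintro s t ⟨u, rfl⟩
      exact ⟨-u, by rw [add_assoc, AddUnits.add_neg, add_zero]⟩
    · rintro s t w ⟨u, rfl⟩ ⟨v, rfl⟩
      exact ⟨u + v, by rw [AddUnits.val_add, add_assoc]⟩
  add' := by
    rintro a b c d ⟨u, rfl⟩ ⟨v, rfl⟩
    refine ⟨u + v, ?_⟩
    rw [AddUnits.val_add]
    abel

/-- The reduced monoid `S_red = S / U(S)`. -/
abbrev Red (S : Type*) [AddCancelCommMonoid S] := (assocCon S).Quotient

variable {S : Type*} [AddCancelCommMonoid S]

/-- The class `[s]` of `s` in `S_red`. -/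
def cls (s : S) : Red S := (assocCon S).mk' s

/-- `a` is an atom: a nonzero nonunit such that in any decomposition
`b + c = a`, one of `b`, `c` is a unit. -/
def IsAddAtom {M : Type*} [AddMonoid M] (a : M) : Prop :=
  a ≠ 0 ∧ ¬ IsAddUnit a ∧ ∀ b c : M, b + c = a → IsAddUnit b ∨ IsAddUnit c

/-- The length `|(c_a)|` of a tuple. -/
def flen (c : Red S →₀ ℕ) : ℕ := c.sum fun _ n => n

/-- The factorization homomorphism `φ_S`. -/
def phi (c : Red S →₀ ℕ) : Red S := c.sum fun x n => n • x

/-- The set of factorizations `Z(s)`: finitely supported tuples indexed by the atoms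
of `S_red` summing to `[s]`. -/
def ZSet (s : S) : Set (Red S →₀ ℕ) :=
  {c | (∀ x ∈ c.support, IsAddAtom x) ∧ phi c = cls s}

/-- The longest factorization length `L(s)`. -/
noncomputable def lenL (s : S) : ℕ := sSup (flen '' ZSet s)

/-- The shortest factorization length `ℓ(s)`. -/
noncomputable def lenl (s : S) : ℕ := sInf (flen '' ZSet s)

/-- `L(s)` is (defined and) finite. -/
def LFinite (s : S) : Prop := (ZSet s).Nonempty ∧ BddAbove (flen '' ZSet s)

/-- `Repl_m(S)`: tuples over the atoms of `S_red` other than `[m]` whose evaluation,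
after subtracting `m`, stays in `S`. -/
def ReplSet (m : S) : Set (Red S →₀ ℕ) :=
  {c | (∀ x ∈ c.support, IsAddAtom x ∧ x ≠ cls m) ∧ ∃ s t : S, cls s = phi c ∧ m + t = s}

/-- `MinRepl_m(S)`: the minimal elements of `Repl_m(S)` under the coordinatewise order. -/
def MinReplSet (m : S) : Set (Red S →₀ ℕ) :=
  {c ∈ ReplSet m | ∀ c' ∈ ReplSet m, c' ≤ c → c' = c}

lemma cls_add (a b : S) : cls (a + b) = cls a + cls b := (assocCon S).mk'.map_add a b

lemma cls_eq {a b : S} : cls a = cls b ↔ ∃ u : AddUnits S, a + (u : S) = b :=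
  (assocCon S).eq

lemma cls_surj (x : Red S) : ∃ a : S, cls a = x := AddCon.mk'_surjective x

lemma red_cancel {x y z : Red S} (h : x + y = x + z) : y = z := by
  obtain ⟨a, rfl⟩ := cls_surj x
  obtain ⟨b, rfl⟩ := cls_surj y
  obtain ⟨c, rfl⟩ := cls_surj z
  rw [← cls_add, ← cls_add, cls_eq] at h
  obtain ⟨u, hu⟩ := h
  rw [add_assoc] at hu
  exact cls_eq.2 ⟨u, add_left_cancel hu⟩

lemma isAddUnit_of_add {a b : S} (h : IsAddUnit (a + b)) : IsAddUnit a := by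
  obtain ⟨u, hu⟩ := h
  refine isAddUnit_iff_exists_neg.2 ⟨b + ((-u : AddUnits S) : S), ?_⟩
  rw [← add_assoc, ← hu, AddUnits.add_neg]

lemma isAddUnit_cls {a : S} : IsAddUnit (cls a) ↔ IsAddUnit a := by
  constructor
  · intro h
    obtain ⟨y, hy⟩ := isAddUnit_iff_exists_neg.1 h
    obtain ⟨b, rfl⟩ := cls_surj y
    have h0 : cls (0 : S) = cls (a + b) := by
      rw [cls_add, hy]; exact (assocCon S).mk'.map_zero
    obtain ⟨u, hu⟩ := cls_eq.1 h0
    rw [zero_add] at hu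
    exact isAddUnit_of_add ⟨u, hu⟩
  · intro h
    exact h.map (assocCon S).mk'

lemma atom_cls {m : S} (hm : IsAddAtom m) : IsAddAtom (cls m) := by
  have hn : ¬ IsAddUnit (cls m) := fun h => hm.2.1 (isAddUnit_cls.1 h)
  refine ⟨fun h => hn (h ▸ isAddUnit_zero), hn, ?_⟩
  intro x y h
  obtain ⟨a, rfl⟩ := cls_surj x
  obtain ⟨b, rfl⟩ := cls_surj y
  rw [← cls_add, cls_eq] at h
  obtain ⟨u, hu⟩ := h
  rw [add_assoc] at hu
  rcases hm.2.2 _ _ hu with h | h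
  · exact Or.inl (isAddUnit_cls.2 h)
  · exact Or.inr (isAddUnit_cls.2 (isAddUnit_of_add h))

lemma flen_add (c d : Red S →₀ ℕ) : flen (c + d) = flen c + flen d :=
  Finsupp.sum_add_index' (fun _ => rfl) (fun _ _ _ => rfl)

lemma phi_add (c d : Red S →₀ ℕ) : phi (c + d) = phi c + phi d :=
  Finsupp.sum_add_index' (fun _ => zero_nsmul _) (fun _ _ _ => add_nsmul _ _ _)

lemma flen_single (x : Red S) : flen (Finsupp.single x 1) = 1 :=
  Finsupp.sum_single_index rfl

lemma phi_single (x : Red S) : phi (Finsupp.single x 1) = x := by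
  exact (Finsupp.sum_single_index (h := fun (x : Red S) (n : ℕ) => n • x) (zero_nsmul x)).trans
    (one_nsmul x)

lemma lenl_le {s : S} {z : Red S →₀ ℕ} (hz : z ∈ ZSet s) : lenl s ≤ flen z :=
  Nat.sInf_le ⟨z, hz, rfl⟩

lemma lenl_attained {s : S} (h : LFinite s) : ∃ z ∈ ZSet s, flen z = lenl s :=
  Nat.sInf_mem (h.1.image flen)

lemma supp_add {P : Red S → Prop} {c d : Red S →₀ ℕ} (hc : ∀ x ∈ c.support, P x)
    (hd : ∀ x ∈ d.support, P x) : ∀ x ∈ (c + d).support, P x := by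
  classical
  intro x hx
  rcases Finset.mem_union.1 (Finsupp.support_add hx) with h | h
  · exact hc x h
  · exact hd x h

lemma supp_le {P : Red S → Prop} {c d : Red S →₀ ℕ} (hcd : c ≤ d)
    (hd : ∀ x ∈ d.support, P x) : ∀ x ∈ c.support, P x :=
  fun x hx => hd x (Finsupp.support_mono hcd hx)

theorem statement5 {S : Type*} [AddCancelCommMonoid S] (m : S)
    (hm : IsAddAtom m) (hfin : ∀ s : S, LFinite s) :
    (∀ s : S, lenl (s + m) = lenl s + 1) ↔
      (∀ c ∈ MinReplSet m, ∀ s t : S, cls s = phi c → m + t = s → lenl s = lenl t + 1) := by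
  constructor
  · rintro h c - s t - rfl
    rw [add_comm, h]
  intro h s
  apply le_antisymm
  · obtain ⟨z, hz, hl⟩ := lenl_attained (hfin s)
    rw [← hl, ← flen_single (cls m), ← flen_add]
    refine lenl_le ⟨supp_add hz.1 ?_, ?_⟩
    · intro x hx
      have := Finsupp.support_single_subset hx
      rw [Finset.mem_singleton] at this
      exact this ▸ atom_cls hm
    · rw [phi_add, phi_single, hz.2, cls_add]
  obtain ⟨z, hz, hl⟩ := lenl_attained (hfin (s + m))
  rw [← hl]
  by_cases hmz : cls m ∈ z.support
  · have hle : Finsupp.single (cls m) 1 ≤ z := by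
      rw [Finsupp.single_le_iff]
      exact Nat.one_le_iff_ne_zero.2 (Finsupp.mem_support_iff.1 hmz)
    obtain ⟨d, rfl⟩ := exists_add_of_le hle
    have hd : d ∈ ZSet s := by
      refine ⟨supp_le le_add_self hz.1, ?_⟩
      have := hz.2
      rw [phi_add, phi_single, cls_add, add_comm (cls s)] at this
      exact red_cancel this
    have := lenl_le hd
    rw [flen_add, flen_single]
    omega
  · have hzR : z ∈ ReplSet m := by
      refine ⟨fun x hx => ⟨hz.1 x hx, ?_⟩, s + m, s, hz.2.symm, add_comm _ _⟩
      rintro rfl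
      exact hmz hx
    have key : ∃ c ≤ z, c ∈ MinReplSet m := by
      obtain ⟨c, hcz, hc⟩ := exists_minimal_le_of_wellFoundedLT (fun c => c ∈ ReplSet m) z hzR
      exact ⟨c, hcz, hc.prop, fun c' hc' hle => le_antisymm hle (hc.le_of_le hc' hle)⟩
    obtain ⟨c, hcz, hc⟩ := key
    obtain ⟨d, rfl⟩ := exists_add_of_le hcz
    obtain ⟨s', t, hs', rfl⟩ := hc.1.2
    have h1 := h c hc _ t hs' rfl
    have h2 : lenl (m + t) ≤ flen c :=
      lenl_le ⟨fun x hx => (hc.1.1 x hx).1, hs'.symm⟩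
    obtain ⟨w, hw, hwl⟩ := lenl_attained (hfin t)
    have hd : w + d ∈ ZSet s := by
      refine ⟨supp_add hw.1 (supp_le le_add_self hz.1), ?_⟩
      have := hz.2
      rw [phi_add, ← hs', cls_add, cls_add, add_comm (cls s), add_assoc] at this
      rw [phi_add, hw.2]
      exact red_cancel this
    have := lenl_le hd
    rw [flen_add] at this ⊢
    omega

end Paper
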